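/- arXiv:2509.12640 — 2 statements merged into one kernel-verified Lean document; each statement's English description precedes it below -/
import Mathlib

section
/- For any connected graph G, if the second largest eigenvalue of its distance matrix is less than -1/2, then G is chordal (every cycle of length at least 4 has a chord). -/
open Polynomial

/-- The distance matrix of a graph, with entries the shortest-path distances. -/
noncomputable def distMatrix {V : Type*} [Fintype V] (G : SimpleGraph V) :
    Matrix V V ℝ := fun i j => (G.dist i j : ℝ)

/-- A graph is chordal if every cycle of length at least four has a chord,
i.e. an edge joining two vertices of the cycle that is not an edge of the cycle. -/
def IsChordal {V : Type*} (G : SimpleGraph V) : Prop :=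
  ∀ (a : V) (w : G.Walk a a), w.IsCycle → 4 ≤ w.length →
    ∃ u v, u ∈ w.support ∧ v ∈ w.support ∧ G.Adj u v ∧ s(u, v) ∉ w.edges

open Matrix in
/-- Spectral step: if the second eigenvalue is below `-1/2`, the quadratic form is below
`-1/2` times the square norm on a hyperplane. -/
theorem exists_hyperplane {n : ℕ} (hn : 2 ≤ n) (A : Matrix (Fin n) (Fin n) ℝ)
    (hA : A.IsHermitian) (μ : Fin n → ℝ) (hmono : Antitone μ)
    (hchar : A.charpoly = ∏ i, (X - C (μ i)))
    (hlt : μ ⟨1, hn⟩ < -1/2) :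
    ∃ u : Fin n → ℝ, ∀ z : Fin n → ℝ, z ≠ 0 → u ⬝ᵥ z = 0 →
      z ⬝ᵥ (A *ᵥ z) < -1/2 * (z ⬝ᵥ z) := by
  have hroots : Multiset.map hA.eigenvalues Finset.univ.val
      = Multiset.map μ Finset.univ.val := by
    have h1 := hA.roots_charpoly_eq_eigenvalues
    have h2 : (∏ i, (X - C (μ i))).roots = Multiset.map μ Finset.univ.val := by
      have h3 := roots_multiset_prod_X_sub_C (Multiset.map μ Finset.univ.val)
      rw [Multiset.map_map] at h3
      exact h3
    rw [hchar, h2] at h1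
    simpa using h1.symm
  have hcard : (Finset.univ.filter (fun i => -1/2 ≤ hA.eigenvalues i)).card ≤ 1 := by
    have h2 := congrArg (Multiset.countP (fun x : ℝ => -1/2 ≤ x)) hroots
    rw [Multiset.countP_map, Multiset.countP_map] at h2
    have h3 : (Finset.univ.filter (fun i => -1/2 ≤ hA.eigenvalues i)).card
        = (Finset.univ.filter (fun i => -1/2 ≤ μ i)).card := h2
    rw [h3, Finset.card_le_one]
    have key : ∀ a : Fin n, -1/2 ≤ μ a → a.val = 0 := by
      intro a ha
      by_contra h
      have : μ a ≤ μ ⟨1, hn⟩ := hmono (by rw [Fin.le_def]; show 1 ≤ a.val; omega)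
      linarith
    intro a ha b hb
    simp only [Finset.mem_filter, Finset.mem_univ, true_and] at ha hb
    exact Fin.ext ((key a ha).trans (key b hb).symm)
  obtain ⟨i0, hi0⟩ : ∃ i0, ∀ i, i ≠ i0 → hA.eigenvalues i < -1/2 := by
    by_cases h : ∃ i0, -1/2 ≤ hA.eigenvalues i0
    · obtain ⟨i0, h0⟩ := h
      refine ⟨i0, fun i hi => ?_⟩
      by_contra hc
      exact hi (Finset.card_le_one.mp hcard i (by simpa using hc) i0 (by simpa using h0))
    · push Not at h
      exact ⟨⟨0, by omega⟩, fun i _ => h i⟩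
  set b := hA.eigenvectorBasis with hb
  let c : (Fin n → ℝ) → Fin n → ℝ := fun z i => (b i : Fin n → ℝ) ⬝ᵥ z
  have parseval : ∀ y z : Fin n → ℝ, y ⬝ᵥ z = ∑ i, c y i * c z i := by
    intro y z
    have := b.sum_inner_mul_inner (WithLp.toLp 2 y) (WithLp.toLp 2 z)
    simp only [EuclideanSpace.inner_eq_star_dotProduct, star_trivial] at this
    rw [dotProduct_comm, ← this]
    refine Finset.sum_congr rfl fun i _ => ?_
    simp only [c]
    rw [dotProduct_comm z]
  have hc : ∀ z i, c (A *ᵥ z) i = hA.eigenvalues i * c z i := by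
    intro z i
    simp only [c]
    have ht : Aᵀ = A := by simpa [Matrix.IsHermitian] using hA
    rw [dotProduct_mulVec, ← mulVec_transpose, ht, hb, hA.mulVec_eigenvectorBasis,
      smul_dotProduct, smul_eq_mul]
  refine ⟨(b i0 : Fin n → ℝ), fun z hz hu => ?_⟩
  rw [parseval z (A *ᵥ z), parseval z z, Finset.mul_sum]
  have hu' : c z i0 = 0 := hu
  have hle : ∀ i, c z i * c (A *ᵥ z) i ≤ -1/2 * (c z i * c z i) := by
    intro i
    rw [hc]
    by_cases hi : i = i0
    · subst hi; simp [hu']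
    · nlinarith [hi0 i hi, mul_self_nonneg (c z i)]
  refine Finset.sum_lt_sum (fun i _ => hle i) ?_
  by_contra hcon
  push Not at hcon
  have hall : ∀ i, c z i = 0 := by
    intro i
    by_cases hi : i = i0
    · rw [hi, hu']
    · have h1 := hcon i (Finset.mem_univ i)
      rw [hc] at h1
      have h2 := hi0 i hi
      by_contra hne
      have : 0 < c z i * c z i := mul_self_pos.mpr hne
      nlinarith
  apply hz
  rw [← dotProduct_self_eq_zero, parseval]
  simp [hall]

open Matrix in
/-- Four distinct vertices with the prescribed distances contradict the hyperplane bound. -/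
theorem four_vertices {n : ℕ} (G : SimpleGraph (Fin n)) (u : Fin n → ℝ)
    (hu : ∀ z : Fin n → ℝ, z ≠ 0 → u ⬝ᵥ z = 0 →
      z ⬝ᵥ (distMatrix G *ᵥ z) < -1/2 * (z ⬝ᵥ z))
    (p q r s : Fin n) (hpq : p ≠ q) (hpr : p ≠ r) (hps : p ≠ s) (hqr : q ≠ r) (hqs : q ≠ s)
    (hrs : r ≠ s) (k : ℕ) (h1 : G.dist p q = 1) (h2 : G.dist p r + 1 = k)
    (h3 : G.dist p s + 1 ≤ k) (h4 : G.dist q r + 2 = k) (h5 : G.dist q s + 1 = k)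
    (h6 : G.dist r s = 1) : False := by
  obtain ⟨f, g, hfg, hz⟩ : ∃ f g : ℝ, (f ≠ 0 ∨ g ≠ 0) ∧
      f * (u p + u r) + g * (u q + u s) = 0 := by
    by_cases h : u p + u r = 0
    · exact ⟨1, 0, by simp, by simp [h]⟩
    · exact ⟨u q + u s, -(u p + u r), Or.inr (neg_ne_zero.mpr h), by ring⟩
  let z : Fin n → ℝ := Pi.single p f + Pi.single r f + Pi.single q g + Pi.single s g
  have hzp : z p = f := by simp [z, hpq, hpr, hps]
  have hzq : z q = g := by simp [z, hpq.symm, hqr, hqs]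
  have hzr : z r = f := by simp [z, hpr.symm, hqr.symm, hrs]
  have hzs : z s = g := by simp [z, hps.symm, hqs.symm, hrs.symm]
  have hdot : ∀ y : Fin n → ℝ, y ⬝ᵥ z = f * (y p + y r) + g * (y q + y s) := by
    intro y
    simp only [z, dotProduct_add, dotProduct_single]
    ring
  have hne : z ≠ 0 := by
    intro h0
    rcases hfg with h | h
    · exact h (by rw [← hzp, h0]; rfl)
    · exact h (by rw [← hzq, h0]; rfl)
  have hmv : ∀ i, (distMatrix G *ᵥ z) i = f * ((G.dist i p : ℝ) + G.dist i r)
      + g * ((G.dist i q : ℝ) + G.dist i s) := fun i => hdot _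
  have main := hu z hne (by rw [hdot]; exact hz)
  rw [dotProduct_comm, hdot, hdot, hzp, hzq, hzr, hzs, hmv, hmv, hmv, hmv] at main
  simp only [SimpleGraph.dist_self, G.dist_comm (u := q) (v := p), G.dist_comm (u := r) (v := p),
    G.dist_comm (u := s) (v := p), G.dist_comm (u := r) (v := q), G.dist_comm (u := s) (v := q),
    G.dist_comm (u := s) (v := r), h1, h6] at main
  have e2 : (G.dist p r : ℝ) = k - 1 := by rw [← h2]; push_cast; ring
  have e4 : (G.dist q r : ℝ) = k - 2 := by rw [← h4]; push_cast; ring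
  have e5 : (G.dist q s : ℝ) = k - 1 := by rw [← h5]; push_cast; ring
  have e3 : (G.dist p s : ℝ) + 1 ≤ k := by exact_mod_cast h3
  have e0 : (0 : ℝ) ≤ G.dist p s := Nat.cast_nonneg _
  have ek : (0 : ℝ) ≤ k := Nat.cast_nonneg _
  rw [e2, e4, e5] at main
  push_cast at main
  nlinarith [mul_nonneg (by linarith : (0 : ℝ) ≤ k + G.dist p s) (sq_nonneg (f + g)),
    mul_nonneg (by linarith : (0 : ℝ) ≤ k - 1 - G.dist p s)
      (add_nonneg (sq_nonneg f) (sq_nonneg g))]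

theorem stmt0 {n : ℕ} (hn : 2 ≤ n) (G : SimpleGraph (Fin n)) (hG : G.Connected)
    (μ : Fin n → ℝ) (hmono : Antitone μ)
    (hchar : (distMatrix G).charpoly = ∏ i, (X - C (μ i)))
    (hlt : μ ⟨1, hn⟩ < -1/2) : IsChordal G := by
  have hH : (distMatrix G).IsHermitian := by
    ext i j
    simp [distMatrix, G.dist_comm]
  obtain ⟨u, hu⟩ := exists_hyperplane hn _ hH μ hmono hchar hlt
  intro a w hw hlen
  by_contra hcon
  push Not at hcon
  have inj : ∀ i j, i < w.length → j < w.length → w.getVert i = w.getVert j → i = j :=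
    fun i j hi hj h => hw.getVert_injOn' (show i ≤ w.length - 1 by omega)
      (show j ≤ w.length - 1 by omega) h
  have hex : ∃ k, ∃ i, i + k < w.length ∧ G.dist (w.getVert i) (w.getVert (i + k)) < k := by
    refine ⟨w.length - 1, 0, by omega, ?_⟩
    have hadj := w.adj_getVert_succ (i := w.length - 1) (by omega)
    rw [Nat.sub_add_cancel (by omega), w.getVert_length] at hadj
    rw [Nat.zero_add, w.getVert_zero, SimpleGraph.dist_eq_one_iff_adj.mpr hadj.symm]
    omega
  classical
  obtain ⟨i, hik, hd⟩ := Nat.find_spec hex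
  have hmin := fun m (hm : m < Nat.find hex) => Nat.find_min hex hm
  generalize Nat.find hex = k at hik hd hmin
  have hup : ∀ m j, j + m < w.length → G.dist (w.getVert j) (w.getVert (j + m)) ≤ m := by
    intro m
    induction m with
    | zero => intro j _; simp
    | succ m ih =>
      intro j hj
      have h1 := ih j (by omega)
      have h2 := SimpleGraph.dist_eq_one_iff_adj.mpr
        (w.adj_getVert_succ (i := j + m) (by omega))
      have h3 := hG.dist_triangle (u := w.getVert j) (v := w.getVert (j + m))
        (w := w.getVert (j + m + 1))
      rw [← add_assoc]
      omega
  have heq : ∀ m j, m < k → j + m < w.length →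
      G.dist (w.getVert j) (w.getVert (j + m)) = m := by
    intro m j hm hj
    have h1 := hmin m hm
    push Not at h1
    exact le_antisymm (hup m j hj) (h1 j hj)
  have hk3 : 3 ≤ k := by
    by_contra hk
    have hne : k ≠ 0 := by rintro rfl; omega
    have hpos : 0 < G.dist (w.getVert i) (w.getVert (i + k)) :=
      hG.pos_dist_of_ne (fun h => hne (by have := inj _ _ (by omega) hik h; omega))
    have hk2 : k = 2 := by omega
    subst hk2
    have hadj : G.Adj (w.getVert i) (w.getVert (i + 2)) :=
      SimpleGraph.dist_eq_one_iff_adj.mp (by omega)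
    have hmem := hcon _ _ (w.getVert_mem_support i) (w.getVert_mem_support (i + 2)) hadj
    obtain ⟨m, hm, he⟩ := w.mk_mem_edges_iff_exists.mp hmem
    by_cases hml : m + 1 = w.length
    · have h0 : w.getVert w.length = w.getVert 0 := w.getVert_length.trans w.getVert_zero.symm
      rw [hml, h0, Sym2.eq_iff] at he
      rcases he with ⟨h1, h2⟩ | ⟨h1, h2⟩
      · have := inj _ _ (by omega) (by omega) h2; omega
      · have := inj _ _ (by omega) (by omega) h1
        have := inj _ _ (by omega) (by omega) h2
        omega
    · rw [Sym2.eq_iff] at he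
      rcases he with ⟨h1, h2⟩ | ⟨h1, h2⟩ <;>
      · have := inj _ _ (by omega) (by omega) h1
        have := inj _ _ (by omega) (by omega) h2
        omega
  have hne : ∀ x y, x < w.length → y < w.length → x ≠ y → w.getVert x ≠ w.getVert y :=
    fun x y hx hy hxy h => hxy (inj x y hx hy h)
  have e1 := heq 1 i (by omega) (by omega)
  have e2 := heq (k - 1) i (by omega) (by omega)
  have e4 := heq (k - 2) (i + 1) (by omega) (by omega)
  have e5 := heq (k - 1) (i + 1) (by omega) (by omega)
  have e6 := heq 1 (i + (k - 1)) (by omega) (by omega)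
  rw [show i + 1 + (k - 2) = i + (k - 1) by omega] at e4
  rw [show i + 1 + (k - 1) = i + k by omega] at e5
  rw [show i + (k - 1) + 1 = i + k by omega] at e6
  exact four_vertices G u hu (w.getVert i) (w.getVert (i + 1)) (w.getVert (i + (k - 1)))
    (w.getVert (i + k)) (hne _ _ (by omega) (by omega) (by omega))
    (hne _ _ (by omega) (by omega) (by omega)) (hne _ _ (by omega) (by omega) (by omega))
    (hne _ _ (by omega) (by omega) (by omega)) (hne _ _ (by omega) (by omega) (by omega))
    (hne _ _ (by omega) (by omega) (by omega)) k e1 (by omega) (by omega) (by omega)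
    (by omega) e6
end

section
/- Let G = T_4^t (t ≥ 1) be the graph on n = t+6 vertices obtained from three triangles v v_1 v_2, v u_1 u_2, v u_2 u_3 (so the second and third triangle share the edge v u_2) with t pendant edges attached at v. Then -2 is a distance eigenvalue of G with multiplicity at least t (equivalently rank(D(G)+2I_n) = 6), and -1 is a distance eigenvalue with multiplicity at least 1. -/
open Polynomial

/-- The tricyclic graph `T₄ᵗ` on `t + 6` vertices: triangles `0,1,2`, `0,3,4`, `0,4,5`
(the last two sharing the edge `{0,4}`), with `t` pendant edges at `0`. -/
def T4 (t : ℕ) : SimpleGraph (Fin (t + 6)) :=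
  SimpleGraph.fromRel (fun a b =>
    (a = 0 ∧ b ≠ 0) ∨ (a.val, b.val) ∈ [(1, 2), (3, 4), (4, 5)])

theorem T4_dist (t : ℕ) (i j : Fin (t + 6)) : (T4 t).dist i j =
    if i.val = j.val then 0 else if i.val = 0 ∨ j.val = 0 ∨
      (i.val, j.val) ∈ [(1, 2), (3, 4), (4, 5), (2, 1), (4, 3), (5, 4)] then 1 else 2 := by
  have adj : ∀ a b : Fin (t + 6), (T4 t).Adj a b ↔ a.val ≠ b.val ∧ (a.val = 0 ∨ b.val = 0 ∨
      (a.val, b.val) ∈ [(1, 2), (3, 4), (4, 5), (2, 1), (4, 3), (5, 4)]) := by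
    intro a b
    simp only [T4, SimpleGraph.fromRel_adj, ne_eq, Fin.ext_iff, Fin.val_zero, List.mem_cons,
      List.not_mem_nil, Prod.mk.injEq, or_false]
    omega
  split_ifs with h1 h2
  · rw [Fin.ext h1, SimpleGraph.dist_self]
  · rw [SimpleGraph.dist_eq_one_iff_adj, adj]
    exact ⟨h1, h2⟩
  · have h0 : (T4 t).Adj i 0 := by
      rw [adj]; simp only [Fin.val_zero]; tauto
    have h0' : (T4 t).Adj 0 j := by
      rw [adj]; simp only [Fin.val_zero]; refine ⟨?_, Or.inl trivial⟩; tauto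
    have hle := SimpleGraph.dist_le (SimpleGraph.Walk.cons h0 (SimpleGraph.Walk.cons h0' .nil))
    have hlt := (h0.reachable.trans h0'.reachable).one_lt_dist_of_ne_of_not_adj
      (fun h => h1 (congrArg Fin.val h)) (fun h => h2 ((adj i j).1 h).2)
    simp only [SimpleGraph.Walk.length_cons, SimpleGraph.Walk.length_nil] at hle
    omega

/-- The quotient of `D + 2I` by equal rows and columns. -/
def quotS : Matrix (Fin 6) (Fin 6) ℝ :=
  !![2,1,1,1,1,1; 1,2,1,2,2,2; 1,1,2,2,2,2; 1,2,2,2,1,2; 1,2,2,1,2,2; 1,2,2,2,2,2]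

/-- The class of a vertex. -/
def cls (k : ℕ) : Fin 6 :=
  match k with
  | 0 => 0
  | 1 => 1
  | 2 => 2
  | 3 => 3
  | 4 => 4
  | 5 => 3
  | _ + 6 => 5

theorem M_eq (t : ℕ) :
    distMatrix (T4 t) + (2 : ℝ) • (1 : Matrix (Fin (t + 6)) (Fin (t + 6)) ℝ) =
    quotS.submatrix (fun i => cls i.val) (fun i => cls i.val) := by
  ext ⟨i, hi⟩ ⟨j, hj⟩
  simp only [Matrix.add_apply, Matrix.smul_apply, Matrix.one_apply, distMatrix, T4_dist,
    Matrix.submatrix_apply, Fin.mk.injEq]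
  rcases i with _ | _ | _ | _ | _ | _ | i <;> rcases j with _ | _ | _ | _ | _ | _ | j <;>
    simp [cls, quotS] <;> norm_num
  by_cases h : i = j <;> simp [h]

theorem quotS_rank : quotS.rank = 6 := by
  have h : IsUnit quotS := by
    refine IsUnit.of_mul_eq_one !![2/3, 0, 0, 0, 0, -1/3; 0, 0, -1, 0, 0, 1; 0, -1, 0, 0, 0, 1; 0, 0, 0, 0, -1, 1; 0, 0, 0, -1, 0, 1; -1/3, 1, 1, 1, 1, -10/3] ?_
    ext i j
    fin_cases i <;> fin_cases j <;> simp [quotS, Matrix.mul_apply, Fin.sum_univ_succ] <;> norm_num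
  simpa using Matrix.rank_of_isUnit _ h

theorem M_rank (t : ℕ) (ht : 1 ≤ t) :
    (distMatrix (T4 t) + (2 : ℝ) • (1 : Matrix (Fin (t + 6)) (Fin (t + 6)) ℝ)).rank = 6 := by
  rw [M_eq]
  apply le_antisymm
  · exact (Matrix.rank_submatrix_le _ _ _).trans quotS_rank.le
  · let c : Fin 6 → Fin (t + 6) := fun k =>
      if k.val = 5 then ⟨6, by omega⟩ else ⟨k.val, by omega⟩
    have hc : ∀ k, cls (c k).val = k := by
      intro k
      fin_cases k <;> rfl
    have := Matrix.rank_submatrix_le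
      (quotS.submatrix (fun i : Fin (t + 6) => cls i.val) (fun i : Fin (t + 6) => cls i.val)) c c
    rw [Matrix.submatrix_submatrix] at this
    have h2 : (fun i : Fin (t + 6) => cls i.val) ∘ c = id := funext hc
    rw [h2, Matrix.submatrix_id_id, quotS_rank] at this
    exact this

/-- For `t ≥ 1`, `-2` is a distance eigenvalue of `T₄ᵗ` of multiplicity at least `t`
(equivalently, `rank(D + 2I) = 6`), and `-1` is a distance eigenvalue of multiplicity
at least `1`. -/
theorem stmt16 (t : ℕ) (ht : 1 ≤ t) :
    t ≤ (distMatrix (T4 t)).charpoly.rootMultiplicity (-2) ∧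
    (distMatrix (T4 t) + (2 : ℝ) • (1 : Matrix (Fin (t + 6)) (Fin (t + 6)) ℝ)).rank = 6 ∧
    1 ≤ (distMatrix (T4 t)).charpoly.rootMultiplicity (-1) := by
  refine ⟨?_, M_rank t ht, ?_⟩
  · have h1 := LinearMap.finrank_eigenspace_le (Matrix.toLin' (distMatrix (T4 t))) (-2)
    rw [Matrix.charpoly_toLin'] at h1
    refine le_trans ?_ h1
    have h2 := M_rank t ht
    have h3 : Module.End.eigenspace (Matrix.toLin' (distMatrix (T4 t))) (-2) =
        LinearMap.ker (distMatrix (T4 t) +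
          (2 : ℝ) • (1 : Matrix (Fin (t + 6)) (Fin (t + 6)) ℝ)).mulVecLin := by
      ext v
      rw [Module.End.mem_eigenspace_iff, LinearMap.mem_ker, Matrix.toLin'_apply,
        Matrix.mulVecLin_apply, Matrix.add_mulVec, Matrix.smul_mulVec, Matrix.one_mulVec,
        neg_smul, eq_neg_iff_add_eq_zero]
    rw [h3]
    have h4 := LinearMap.finrank_range_add_finrank_ker (distMatrix (T4 t) +
          (2 : ℝ) • (1 : Matrix (Fin (t + 6)) (Fin (t + 6)) ℝ)).mulVecLin
    rw [Matrix.rank] at h2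
    rw [h2, Module.finrank_fin_fun] at h4
    omega
  · rw [Nat.one_le_iff_ne_zero, ← Nat.pos_iff_ne_zero,
      Polynomial.rootMultiplicity_pos (Matrix.charpoly_monic _).ne_zero, Polynomial.IsRoot,
      Matrix.eval_charpoly]
    have h12 : (⟨1, by omega⟩ : Fin (t + 6)) ≠ ⟨2, by omega⟩ := by simp
    refine Matrix.det_zero_of_row_eq h12 ?_
    ext ⟨j, hj⟩
    simp only [Matrix.sub_apply, Matrix.scalar_apply, Matrix.diagonal_apply, distMatrix, T4_dist,
      Fin.mk.injEq]
    rcases j with _ | _ | _ | j <;> simp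
end
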